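/- arXiv:2406.10608 — 2 statements merged into one kernel-verified Lean document; each statement's English description precedes it below -/
import Mathlib

section
/- Let (I, vtx, w) be a weighted k-instance family on a finite vertex set V, let ξ > 0, let W* ⊆ V be optimal, and let W ⊆ V with W* ⊆ W. If some v ∈ W* satisfies deg_W(v) ≤ k(1+ξ) · τ(W)/|W|, then ρ(W) ≥ ρ(W*)/(k(1+ξ)). -/
/-!
In an optimal set `W*` every vertex `v` has degree at least `ρ(W*)`: deleting `v` removes exactly
`deg_{W*}(v)` from `τ(W*)`, and optimality bounds what is left by `ρ(W*) (|W*| - 1)`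
(`rhoW_le_degW_of_optimal`). Since weights are nonnegative, degrees only grow when passing from `W*`
to `W ⊇ W*`, so `ρ(W*) ≤ deg_{W*}(v) ≤ deg_W(v) ≤ k(1+ξ) ρ(W)`.
-/

open Finset MeasureTheory

open scoped Classical

variable {α ι : Type*} [DecidableEq α]

noncomputable def tauW (I : Finset ι) (vtx : ι → Finset α) (w : ι → ℝ) (W : Finset α) : ℝ :=
  ∑ i ∈ I.filter (fun i => vtx i ⊆ W), w i

noncomputable def degW (I : Finset ι) (vtx : ι → Finset α) (w : ι → ℝ) (W : Finset α)
    (v : α) : ℝ :=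
  ∑ i ∈ I.filter (fun i => vtx i ⊆ W ∧ v ∈ vtx i), w i

noncomputable def rhoW (I : Finset ι) (vtx : ι → Finset α) (w : ι → ℝ) (W : Finset α) : ℝ :=
  tauW I vtx w W / (W.card : ℝ)

def OptimalTMDS (I : Finset ι) (vtx : ι → Finset α) (w : ι → ℝ) (V Wstar : Finset α) : Prop :=
  Wstar ⊆ V ∧ Wstar.Nonempty ∧
    ∀ W ⊆ V, W.Nonempty → rhoW I vtx w W ≤ rhoW I vtx w Wstar

noncomputable def batchL (k : ℕ) (ξ : ℝ) (I : Finset ι) (vtx : ι → Finset α) (w : ι → ℝ)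
    (W : Finset α) : Finset α :=
  W.filter (fun v => degW I vtx w W v ≤ (k : ℝ) * (1 + ξ) * tauW I vtx w W / (W.card : ℝ))

/-- The instances inside `W` split into those avoiding `v` and those containing `v`. -/
theorem tauW_erase_add_degW (I : Finset ι) (vtx : ι → Finset α) (w : ι → ℝ) (W : Finset α) (v : α) :
    tauW I vtx w (W.erase v) + degW I vtx w W v = tauW I vtx w W := by
  unfold tauW degW
  rw [← Finset.sum_filter_add_sum_filter_not (I.filter (fun i => vtx i ⊆ W)) (fun i => v ∉ vtx i),
    Finset.filter_filter, Finset.filter_filter]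
  simp only [Finset.subset_erase, not_not]

theorem degW_mono {I : Finset ι} {vtx : ι → Finset α} {w : ι → ℝ} (hw : ∀ i ∈ I, 0 ≤ w i)
    {U W : Finset α} (h : U ⊆ W) (v : α) : degW I vtx w U v ≤ degW I vtx w W v := by
  unfold degW
  refine Finset.sum_le_sum_of_subset_of_nonneg ?_ fun i hi _ => hw i (Finset.mem_filter.1 hi).1
  intro i hi
  simp only [Finset.mem_filter] at hi ⊢
  exact ⟨hi.1, hi.2.1.trans h, hi.2.2⟩

/-- Nonemptiness of the instances gives `τ(∅) = 0`, so that the bound also covers `U = ∅`. -/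
theorem tauW_le_of_optimal {I : Finset ι} {vtx : ι → Finset α} {w : ι → ℝ}
    (hne : ∀ i ∈ I, (vtx i).Nonempty) {V Wstar : Finset α} (hopt : OptimalTMDS I vtx w V Wstar)
    {U : Finset α} (hU : U ⊆ V) : tauW I vtx w U ≤ rhoW I vtx w Wstar * (U.card : ℝ) := by
  rcases U.eq_empty_or_nonempty with rfl | hUne
  · have h0 : tauW I vtx w ∅ = 0 := by
      unfold tauW
      rw [Finset.filter_eq_empty_iff.2, Finset.sum_empty]
      intro i hi h
      exact (hne i hi).ne_empty (Finset.subset_empty.1 h)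
    simp [h0]
  · have hpos : (0 : ℝ) < U.card := by exact_mod_cast hUne.card_pos
    exact (div_le_iff₀ hpos).1 (hopt.2.2 U hU hUne)

/-- Deleting `v` leaves weight `τ(W*) - deg_{W*}(v)`, which is at most `ρ(W*) (|W*| - 1)`. -/
theorem rhoW_le_degW_of_optimal {I : Finset ι} {vtx : ι → Finset α} {w : ι → ℝ}
    (hne : ∀ i ∈ I, (vtx i).Nonempty) {V Wstar : Finset α} (hopt : OptimalTMDS I vtx w V Wstar)
    {v : α} (hv : v ∈ Wstar) : rhoW I vtx w Wstar ≤ degW I vtx w Wstar v := by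
  have h1 := tauW_le_of_optimal hne hopt ((Wstar.erase_subset v).trans hopt.1)
  have h2 := tauW_erase_add_degW I vtx w Wstar v
  have hcard : ((Wstar.erase v).card : ℝ) + 1 = Wstar.card := by
    exact_mod_cast Finset.card_erase_add_one hv
  have hpos : (Wstar.card : ℝ) ≠ 0 := by
    exact_mod_cast (Finset.card_pos.2 hopt.2.1).ne'
  have h3 : rhoW I vtx w Wstar * (Wstar.card : ℝ) = tauW I vtx w Wstar :=
    div_mul_cancel₀ _ hpos
  rw [← hcard, mul_add, mul_one] at h3
  linarith

/-- If `W*` is optimal, `W* ⊆ W ⊆ V`, and some `v ∈ W*` satisfies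
`deg_W(v) ≤ k(1+ξ)·τ(W)/|W|`, then `ρ(W) ≥ ρ(W*)/(k(1+ξ))`. -/
theorem stmt6
    (k : ℕ) (hk : 2 ≤ k)
    (V : Finset α) (I : Finset ι) (vtx : ι → Finset α) (w : ι → ℝ)
    (hvtx : ∀ i ∈ I, vtx i ⊆ V) (hcard : ∀ i ∈ I, (vtx i).card = k)
    (hw : ∀ i ∈ I, 0 ≤ w i)
    (ξ : ℝ) (hξ : 0 < ξ)
    (Wstar : Finset α) (hopt : OptimalTMDS I vtx w V Wstar)
    (W : Finset α) (hWV : W ⊆ V) (hsub : Wstar ⊆ W)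
    (v : α) (hv : v ∈ Wstar)
    (hdeg : degW I vtx w W v ≤ (k : ℝ) * (1 + ξ) * tauW I vtx w W / (W.card : ℝ)) :
    rhoW I vtx w Wstar / ((k : ℝ) * (1 + ξ)) ≤ rhoW I vtx w W := by
  have hne : ∀ i ∈ I, (vtx i).Nonempty := fun i hi =>
    Finset.card_pos.1 (by rw [hcard i hi]; omega)
  have hk0 : (0 : ℝ) < k := by exact_mod_cast (by omega : 0 < k)
  have hpos : (0 : ℝ) < (k : ℝ) * (1 + ξ) := by positivity
  rw [div_le_iff₀' hpos]
  calc rhoW I vtx w Wstar ≤ degW I vtx w Wstar v := rhoW_le_degW_of_optimal hne hopt hv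
    _ ≤ degW I vtx w W v := degW_mono hw hsub v
    _ ≤ (k : ℝ) * (1 + ξ) * tauW I vtx w W / (W.card : ℝ) := hdeg
    _ = (k : ℝ) * (1 + ξ) * rhoW I vtx w W := mul_div_assoc _ _ _
end

section
/- (Batch peeling performs at most O(log_{1+ξ} n) iterations.) Let (I, vtx, w) be a weighted k-instance family on a finite vertex set V with |V| = n, let ξ > 0, and define W_1 = V and W_{i+1} = W_i ∖ L(W_i) for every i ≥ 1 (with W_{i+1} = ∅ if W_i = ∅). Then for every i ≥ 1, |W_i| ≤ n/(1+ξ)^{i−1}; in particular W_i = ∅ for every i with (1+ξ)^{i−1} > n. -/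
/-!
Double counting gives `∑_{v ∈ W} deg_W(v) = k · τ(W)`: every instance inside `W` is counted once for
each of its `k` vertices. A vertex surviving the peeling of `W` has degree exceeding `k(1+ξ)τ(W)/|W|`,
so if `τ(W) > 0` a Markov-type count leaves at most `|W|/(1+ξ)` survivors (`card_survivors_le`). If
`τ(W) = 0`, all degrees vanish and nothing survives. Iterating this bound along the chain gives the
geometric decay, and a cardinality below `1` is `0`.
-/

open Finset MeasureTheory

open scoped Classical

variable {α ι : Type*} [DecidableEq α]

theorem sum_degW (k : ℕ) (I : Finset ι) (vtx : ι → Finset α) (w : ι → ℝ)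
    (hcard : ∀ i ∈ I, (vtx i).card = k) (W : Finset α) :
    ∑ v ∈ W, degW I vtx w W v = (k : ℝ) * tauW I vtx w W := by
  unfold degW tauW
  simp_rw [← Finset.filter_filter, Finset.sum_filter (fun i => _ ∈ vtx i)]
  rw [Finset.sum_comm, Finset.mul_sum]
  refine Finset.sum_congr rfl fun i hi => ?_
  obtain ⟨hiI, hiW⟩ := Finset.mem_filter.mp hi
  rw [← Finset.sum_filter, Finset.filter_mem_eq_inter, Finset.inter_eq_right.mpr hiW,
    Finset.sum_const, hcard i hiI, nsmul_eq_mul]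

theorem degW_nonneg (I : Finset ι) (vtx : ι → Finset α) (w : ι → ℝ)
    (hw : ∀ i ∈ I, 0 ≤ w i) (W : Finset α) (v : α) : 0 ≤ degW I vtx w W v :=
  Finset.sum_nonneg fun i hi => hw i (Finset.mem_filter.mp hi).1

theorem tauW_nonneg (I : Finset ι) (vtx : ι → Finset α) (w : ι → ℝ)
    (hw : ∀ i ∈ I, 0 ≤ w i) (W : Finset α) : 0 ≤ tauW I vtx w W :=
  Finset.sum_nonneg fun i hi => hw i (Finset.mem_filter.mp hi).1

/-- One round of batch peeling shrinks the vertex set by a factor of at least `1 + ξ`. -/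
theorem card_survivors_le (k : ℕ) (hk : 0 < k) (I : Finset ι) (vtx : ι → Finset α) (w : ι → ℝ)
    (hcard : ∀ i ∈ I, (vtx i).card = k) (hw : ∀ i ∈ I, 0 ≤ w i) (ξ : ℝ) (W : Finset α) :
    ((W \ batchL k ξ I vtx w W).card : ℝ) * (1 + ξ) ≤ (W.card : ℝ) := by
  have hsum := sum_degW k I vtx w hcard W
  have hdeg := degW_nonneg I vtx w hw W
  have hsurv : ∀ v ∈ W \ batchL k ξ I vtx w W,
      (k : ℝ) * (1 + ξ) * tauW I vtx w W / (W.card : ℝ) < degW I vtx w W v := by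
    intro v hv
    obtain ⟨hvW, hvL⟩ := Finset.mem_sdiff.mp hv
    by_contra! h
    exact hvL (Finset.mem_filter.mpr ⟨hvW, h⟩)
  rcases (tauW_nonneg I vtx w hw W).eq_or_lt with h0 | hpos
  · have hempty : W \ batchL k ξ I vtx w W = ∅ := by
      refine Finset.eq_empty_of_forall_notMem fun v hv => ?_
      have h1 := hsurv v hv
      have h2 := Finset.single_le_sum (fun u _ => hdeg u) (Finset.mem_sdiff.mp hv).1
      rw [hsum] at h2
      simp only [← h0, mul_zero, zero_div] at h1 h2
      linarith
    simp [hempty]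
  · rcases W.eq_empty_or_nonempty with rfl | hne
    · simp
    have hc : (0 : ℝ) < W.card := by exact_mod_cast hne.card_pos
    have hkτ : (0 : ℝ) < k * tauW I vtx w W := mul_pos (by exact_mod_cast hk) hpos
    have h1 := Finset.card_nsmul_le_sum _ _ _ fun v hv => (hsurv v hv).le
    have h2 := Finset.sum_le_sum_of_subset_of_nonneg
      (Finset.sdiff_subset : W \ batchL k ξ I vtx w W ⊆ W) fun v _ _ => hdeg v
    have h3 := h1.trans h2
    rw [hsum, nsmul_eq_mul, ← mul_div_assoc, div_le_iff₀ hc] at h3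
    refine le_of_mul_le_mul_left ?_ hkτ
    linarith

/-- Along the batch-peeling chain `W_1 = V`, `W_{i+1} = W_i ∖ L(W_i)`,
for every `i ≥ 1` one has `|W_i| ≤ n/(1+ξ)^{i−1}`; in particular `W_i = ∅` whenever
`(1+ξ)^{i−1} > n`. -/
theorem stmt9
    (k : ℕ) (hk : 2 ≤ k)
    (V : Finset α) (I : Finset ι) (vtx : ι → Finset α) (w : ι → ℝ)
    (hvtx : ∀ i ∈ I, vtx i ⊆ V) (hcard : ∀ i ∈ I, (vtx i).card = k)
    (hw : ∀ i ∈ I, 0 ≤ w i)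
    (n : ℕ) (hn : V.card = n)
    (ξ : ℝ) (hξ : 0 < ξ)
    (Wc : ℕ → Finset α)
    (hW1 : Wc 1 = V)
    (hstep : ∀ i, 1 ≤ i → Wc (i + 1) = Wc i \ batchL k ξ I vtx w (Wc i)) :
    (∀ i, 1 ≤ i → ((Wc i).card : ℝ) ≤ (n : ℝ) / (1 + ξ) ^ (i - 1)) ∧
      ∀ i, 1 ≤ i → (n : ℝ) < (1 + ξ) ^ (i - 1) → Wc i = ∅ := by
  have hξ' : (0 : ℝ) < 1 + ξ := by linarith
  have hbound : ∀ i, 1 ≤ i → ((Wc i).card : ℝ) ≤ (n : ℝ) / (1 + ξ) ^ (i - 1) := by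
    intro i hi
    induction i, hi using Nat.le_induction with
    | base => simp [hW1, hn]
    | succ i hi ih =>
      have h := card_survivors_le k (by omega) I vtx w hcard hw ξ (Wc i)
      rw [← hstep i hi] at h
      obtain ⟨j, rfl⟩ : ∃ j, i = j + 1 := ⟨i - 1, by omega⟩
      simp only [Nat.add_sub_cancel] at ih ⊢
      rw [pow_succ, ← div_div, le_div_iff₀ hξ']
      exact h.trans ih
  refine ⟨hbound, fun i hi hlt => ?_⟩
  have h : ((Wc i).card : ℝ) < 1 :=
    (hbound i hi).trans_lt ((div_lt_one (pow_pos hξ' _)).mpr hlt)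
  exact Finset.card_eq_zero.mp (Nat.lt_one_iff.mp (by exact_mod_cast h))
end
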